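/- For every natural number m and all real numbers x, y, z, one has Σ_{n=0}^{m} (-1)^n · C(x+y+nz, m-n) · C(y+n(z+1), n) = (z+1) · Σ_{0≤l≤n≤m} (-1)^n · C(n,l) · C(x+1+l, m-n) · (1+z)^{n+l} · (1-z)^{n-l} − z · Σ_{0≤l≤n≤m} (-1)^n · C(n,l) · C(x+l, m-n) · (1+z)^{n+l} · (1-z)^{n-l}. -/

import Mathlib

open Finset PowerSeries

/-- Generalized binomial coefficient `C(x, k) = x(x-1)⋯(x-k+1)/k!` for real `x`. -/
noncomputable def gchoose (x : ℝ) (k : ℕ) : ℝ :=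
  (∏ i ∈ Finset.range k, (x - i)) / (Nat.factorial k)

/-- The binomial series `(1+t)^x = Σ C(x,k) t^k` as a formal power series. -/
noncomputable def binomSeries (x : ℝ) : PowerSeries ℝ :=
  PowerSeries.mk fun k => gchoose x k

/-!
Write `B x = (1 + X) ^ x` for the binomial series and `I = 1 / (1 + (z + 1) X)`.

The product `C(y + n z, m - n) C(y + n (z + 1), n)` equals `C(m, n) C(y + n (z + 1), m)`, so for
`x = 0` the left-hand side is the coefficient of `X ^ m` in `B y * (1 - B (z + 1)) ^ m`. As
`1 - B (z + 1) = -(z + 1) X + ⋯`, this is `(-(z + 1)) ^ m`, the coefficient of `X ^ m` in `I`. By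
Vandermonde's identity, a general `x` multiplies the generating function by `B x`, giving `B x * I`.

Each double sum is a coefficient of `B x` (or `B (x + 1)`) times a geometric series of ratio
`-(1 + z) X ((1 + z) (1 + X) + (1 - z)) = 1 - (1 + (z + 1) X) ^ 2`, which sums to `I ^ 2`. Since
`(z + 1) (1 + X) - z = 1 + (z + 1) X`, the combination on the right-hand side is `B x * I` too.
-/

section FormalSums

/-- The formal sum `∑ₙ Xⁿ Fₙ` of a sequence of power series, defined coefficientwise because only
the terms with `n ≤ m` contribute to the coefficient of `X ^ m`. -/
noncomputable def sumXPowMul {R : Type*} [Semiring R] (F : ℕ → R⟦X⟧) : R⟦X⟧ :=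
  PowerSeries.mk fun m => ∑ n ∈ range (m + 1), coeff (m - n) (F n)

lemma coeff_sumXPowMul {R : Type*} [Semiring R] (F : ℕ → R⟦X⟧) (m : ℕ) :
    coeff m (sumXPowMul F) = ∑ n ∈ range (m + 1), coeff (m - n) (F n) :=
  coeff_mk _ _

lemma sumXPowMul_eq_add_X_mul {R : Type*} [Semiring R] (F : ℕ → R⟦X⟧) :
    sumXPowMul F = F 0 + X * sumXPowMul fun n => F (n + 1) := by
  ext m
  cases m with
  | zero => simp [coeff_sumXPowMul]
  | succ m =>
    rw [map_add, coeff_succ_X_mul, coeff_sumXPowMul, coeff_sumXPowMul, sum_range_succ', add_comm]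
    simp only [Nat.add_sub_add_right, Nat.sub_zero]

lemma mul_sumXPowMul {R : Type*} [Semiring R] (φ : R⟦X⟧) (F : ℕ → R⟦X⟧) :
    φ * sumXPowMul F = sumXPowMul fun n => φ * F n := by
  ext m
  induction m generalizing F with
  | zero => simp [sumXPowMul_eq_add_X_mul F, sumXPowMul_eq_add_X_mul fun n => φ * F n]
  | succ m ih =>
    rw [sumXPowMul_eq_add_X_mul F, sumXPowMul_eq_add_X_mul fun n => φ * F n, mul_add, ← mul_assoc,
      (commute_X φ).eq, mul_assoc, map_add, map_add, coeff_succ_X_mul, coeff_succ_X_mul, ih]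

lemma one_sub_X_mul_mul_sumXPowMul_pow {R : Type*} [Ring R] (r : R⟦X⟧) :
    (1 - X * r) * sumXPowMul (fun n => r ^ n) = 1 := by
  have h_rec : sumXPowMul (fun n => r ^ n) = 1 + X * (r * sumXPowMul fun n => r ^ n) := by
    simpa only [mul_sumXPowMul, pow_succ', pow_zero] using
      sumXPowMul_eq_add_X_mul fun n => r ^ n
  rw [sub_mul, one_mul, mul_assoc, sub_eq_iff_eq_add]
  exact h_rec

/-- The geometric series `1 / (1 - a X)`. -/
noncomputable def geomSeries {R : Type*} [Semiring R] (a : R) : R⟦X⟧ :=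
  PowerSeries.mk fun n => a ^ n

lemma geomSeries_mul_one_sub {R : Type*} [CommRing R] (a : R) :
    geomSeries a * (1 - C a * X) = 1 := by
  simpa [geomSeries, rescale_mk, rescale_X] using
    congrArg (rescale a) (mk_one_mul_one_sub_eq_one R)

lemma sumXPowMul_pow_eq_geomSeries_sq {R : Type*} [CommRing R] (z : R) :
    sumXPowMul (fun n => (C (-(1 + z)) * (C (1 + z) * (1 + X) + C (1 - z))) ^ n) =
      geomSeries (-(z + 1)) ^ 2 := by
  set r : R⟦X⟧ := C (-(1 + z)) * (C (1 + z) * (1 + X) + C (1 - z)) with hr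
  have h_square : 1 - X * r = (1 - C (-(z + 1)) * X) ^ 2 := by
    simp only [hr, map_add, map_sub, map_neg, map_one]
    ring
  have h_inverse : geomSeries (-(z + 1)) ^ 2 * (1 - X * r) = 1 := by
    rw [h_square, ← mul_pow, geomSeries_mul_one_sub, one_pow]
  exact (left_inv_eq_right_inv h_inverse (one_sub_X_mul_mul_sumXPowMul_pow r)).symm

lemma coeff_mul_pow_of_constantCoeff_eq_zero {R : Type*} [CommSemiring R] (ψ : R⟦X⟧) {φ : R⟦X⟧}
    (hφ : constantCoeff φ = 0) (m : ℕ) :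
    coeff m (ψ * φ ^ m) = constantCoeff ψ * coeff 1 φ ^ m := by
  obtain ⟨g, rfl⟩ := X_dvd_iff.mpr hφ
  have h_coeff_one : coeff 1 (X * g) = constantCoeff g := by simp
  have h_factor : ψ * (X * g) ^ m = X ^ m * (ψ * g ^ m) := by ring
  rw [h_coeff_one, h_factor]
  simpa using coeff_X_pow_mul (ψ * g ^ m) m 0

end FormalSums

section BinomialRing

variable {R : Type*} [CommRing R] [BinomialRing R]

lemma coeff_binomialSeries_self (x : R) (k : ℕ) :
    coeff k (PowerSeries.binomialSeries R x) = Ring.choose x k := by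
  rw [binomialSeries_coeff, smul_eq_mul, mul_one]

lemma binomialSeries_natCast_mul (n : ℕ) (a : R) :
    PowerSeries.binomialSeries R (n * a) = PowerSeries.binomialSeries R a ^ n := by
  induction n with
  | zero => simp
  | succ n ih => rw [Nat.cast_succ, add_one_mul, binomialSeries_add, ih, pow_succ]

lemma binomialSeries_add_one (x : R) :
    PowerSeries.binomialSeries R (x + 1) = PowerSeries.binomialSeries R x * (1 + X) := by
  rw [binomialSeries_add, ← Nat.cast_one, binomialSeries_nat, pow_one]

lemma alternating_sum_choose_mul_ringChoose (m : ℕ) (y a : R) :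
    ∑ n ∈ range (m + 1), (-1) ^ n * (m.choose n : R) * Ring.choose (y + n * a) m = (-a) ^ m := by
  have h_expand : PowerSeries.binomialSeries R y * (1 - PowerSeries.binomialSeries R a) ^ m =
      ∑ n ∈ range (m + 1),
        C ((-1) ^ n * (m.choose n : R)) * PowerSeries.binomialSeries R (y + n * a) := by
    rw [sub_eq_neg_add, add_pow, mul_sum]
    refine sum_congr rfl fun n _ => ?_
    rw [binomialSeries_add, binomialSeries_natCast_mul, neg_pow, one_pow]
    simp only [map_mul, map_pow, map_neg, map_one, map_natCast]
    ring
  have h_const : constantCoeff (1 - PowerSeries.binomialSeries R a) = 0 := by simp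
  have h_coeff := coeff_mul_pow_of_constantCoeff_eq_zero (PowerSeries.binomialSeries R y) h_const m
  rw [h_expand, map_sum] at h_coeff
  simpa only [coeff_C_mul, coeff_binomialSeries_self, binomialSeries_constantCoeff, map_sub,
    coeff_one, one_ne_zero, if_false, Ring.choose_one_right, zero_sub, one_mul] using h_coeff

lemma alternating_sum_ringChoose_mul_ringChoose (m : ℕ) (y z : R) :
    ∑ n ∈ range (m + 1),
        (-1) ^ n * Ring.choose (y + n * z) (m - n) * Ring.choose (y + n * (z + 1)) n =
      (-(z + 1)) ^ m := by
  rw [← alternating_sum_choose_mul_ringChoose m y (z + 1)]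
  refine sum_congr rfl fun n hn => ?_
  have h_trinomial := Ring.choose_smul_choose (y + n * (z + 1)) (mem_range_succ_iff.mp hn)
  rw [nsmul_eq_mul, show y + n * (z + 1) - n = y + n * z by ring] at h_trinomial
  linear_combination -(-1) ^ n * h_trinomial

lemma alternating_sum_ringChoose_add_mul_ringChoose (m : ℕ) (x y z : R) :
    ∑ n ∈ range (m + 1),
        (-1) ^ n * Ring.choose (x + y + n * z) (m - n) * Ring.choose (y + n * (z + 1)) n =
      coeff m (PowerSeries.binomialSeries R x * geomSeries (-(z + 1))) := by
  have h_geom : geomSeries (-(z + 1)) = sumXPowMul fun n =>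
      C ((-1) ^ n * Ring.choose (y + n * (z + 1)) n) *
        PowerSeries.binomialSeries R (y + n * z) := by
    ext k
    rw [geomSeries, coeff_mk, ← alternating_sum_ringChoose_mul_ringChoose k y z, coeff_sumXPowMul]
    refine sum_congr rfl fun n _ => ?_
    rw [coeff_C_mul, coeff_binomialSeries_self, mul_right_comm]
  rw [h_geom, mul_sumXPowMul, coeff_sumXPowMul]
  refine sum_congr rfl fun n _ => ?_
  rw [mul_left_comm, ← binomialSeries_add, coeff_C_mul, coeff_binomialSeries_self, ← add_assoc,
    mul_right_comm]

lemma coeff_binomialSeries_mul_pow (x b c : R) (n k : ℕ) :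
    coeff k (PowerSeries.binomialSeries R x * (C b * (1 + X) + C c) ^ n) =
      ∑ l ∈ range (n + 1), (n.choose l : R) * Ring.choose (x + l) k * b ^ l * c ^ (n - l) := by
  rw [add_pow, mul_sum, map_sum]
  refine sum_congr rfl fun l _ => ?_
  have h_term : PowerSeries.binomialSeries R x *
      ((C b * (1 + X)) ^ l * C c ^ (n - l) * (n.choose l : R⟦X⟧)) =
        C ((n.choose l : R) * b ^ l * c ^ (n - l)) * PowerSeries.binomialSeries R (x + l) := by
    rw [binomialSeries_add, binomialSeries_nat, mul_pow]
    simp only [map_mul, map_pow, map_natCast]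
    ring
  rw [h_term, coeff_C_mul, coeff_binomialSeries_self]
  ring

lemma double_sum_eq_coeff_binomialSeries_mul_geomSeries_sq (m : ℕ) (x z : R) :
    ∑ n ∈ range (m + 1), ∑ l ∈ range (n + 1),
        (-1) ^ n * (n.choose l : R) * Ring.choose (x + l) (m - n) *
          (1 + z) ^ (n + l) * (1 - z) ^ (n - l) =
      coeff m (PowerSeries.binomialSeries R x * geomSeries (-(z + 1)) ^ 2) := by
  rw [← sumXPowMul_pow_eq_geomSeries_sq, mul_sumXPowMul, coeff_sumXPowMul]
  refine sum_congr rfl fun n _ => ?_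
  rw [mul_pow, mul_left_comm, ← map_pow, coeff_C_mul, coeff_binomialSeries_mul_pow, mul_sum,
    neg_pow (1 + z)]
  refine sum_congr rfl fun l _ => ?_
  ring

theorem sum_eq_double_sum_combination_general (m : ℕ) (x y z : R) :
    ∑ n ∈ range (m + 1),
        (-1) ^ n * Ring.choose (x + y + n * z) (m - n) * Ring.choose (y + n * (z + 1)) n =
      (z + 1) * ∑ n ∈ range (m + 1), ∑ l ∈ range (n + 1),
            (-1) ^ n * (n.choose l : R) * Ring.choose (x + 1 + l) (m - n) *
              (1 + z) ^ (n + l) * (1 - z) ^ (n - l) -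
        z * ∑ n ∈ range (m + 1), ∑ l ∈ range (n + 1),
            (-1) ^ n * (n.choose l : R) * Ring.choose (x + l) (m - n) *
              (1 + z) ^ (n + l) * (1 - z) ^ (n - l) := by
  rw [alternating_sum_ringChoose_add_mul_ringChoose,
    double_sum_eq_coeff_binomialSeries_mul_geomSeries_sq,
    double_sum_eq_coeff_binomialSeries_mul_geomSeries_sq,
    ← coeff_C_mul, ← coeff_C_mul, ← map_sub, binomialSeries_add_one]
  congr 1
  set B := PowerSeries.binomialSeries R x
  set I := geomSeries (-(z + 1))
  have h_inverse : I * (1 - C (-(z + 1)) * X) = 1 := geomSeries_mul_one_sub _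
  have h_linear : C (z + 1) * (1 + X) - C z = 1 - C (-(z + 1)) * X := by
    simp only [map_add, map_neg, map_one]
    ring
  calc B * I = B * I * (I * (1 - C (-(z + 1)) * X)) := by rw [h_inverse, mul_one]
    _ = C (z + 1) * (B * (1 + X) * I ^ 2) - C z * (B * I ^ 2) := by rw [← h_linear]; ring

end BinomialRing

lemma gchoose_eq_ringChoose (x : ℝ) (k : ℕ) : gchoose x k = Ring.choose x k := by
  have h_eval : (descPochhammer ℤ k).smeval x = ∏ i ∈ range k, (x - i) := by
    rw [← descPochhammer_eval_eq_prod_range, ← descPochhammer_map (Int.castRingHom ℝ),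
      Polynomial.eval_map, ← Polynomial.eval₂_smulOneHom_eq_smeval]
    congr 1
    exact Subsingleton.elim _ _
  rw [gchoose, Ring.choose_eq_smul, h_eval, smul_eq_mul, inv_mul_eq_div]

theorem sum_eq_double_sum_combination (m : ℕ) (x y z : ℝ) :
    ∑ n ∈ Finset.range (m + 1),
        (-1 : ℝ) ^ n * gchoose (x + y + n * z) (m - n) * gchoose (y + n * (z + 1)) n =
      (z + 1) * ∑ n ∈ Finset.range (m + 1), ∑ l ∈ Finset.range (n + 1),
            (-1 : ℝ) ^ n * (n.choose l : ℝ) * gchoose (x + 1 + l) (m - n) *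
              (1 + z) ^ (n + l) * (1 - z) ^ (n - l) -
        z * ∑ n ∈ Finset.range (m + 1), ∑ l ∈ Finset.range (n + 1),
            (-1 : ℝ) ^ n * (n.choose l : ℝ) * gchoose (x + l) (m - n) *
              (1 + z) ^ (n + l) * (1 - z) ^ (n - l) := by
  simpa only [gchoose_eq_ringChoose] using sum_eq_double_sum_combination_general m x y z
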